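/- arXiv:2403.07136 — 2 statements merged into one kernel-verified Lean document; each statement's English description precedes it below -/
import Mathlib

section
/- Let X, X' ∈ ℝ^{d×n} be real matrices, R ∈ ℝⁿ a vector, and γ ∈ ℝ. Define the least-squares estimates Âᵀ = (XXᵀ)⁻¹X(X')ᵀ and θ̂ = (XXᵀ)⁻¹XR. If XXᵀ, X(X − γX')ᵀ and I_d − γÂᵀ are all invertible, then the LSTD estimator equals the model-based plug-in estimator: (X(X − γX')ᵀ)⁻¹ X R = (I_d − γÂᵀ)⁻¹ θ̂. -/
open Matrix

/-- Theorem 2: LSTD = model-based, linear rewards.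
With `Âᵀ = (XXᵀ)⁻¹X(X')ᵀ` and `θ̂ = (XXᵀ)⁻¹XR` the least-squares estimates, if `XXᵀ`,
`X(X - γX')ᵀ` and `I_d - γÂᵀ` are invertible, the LSTD estimator equals the model-based
plug-in estimator: `(X(X - γX')ᵀ)⁻¹ X R = (I_d - γÂᵀ)⁻¹ θ̂`. -/
theorem lstd_eq_modelBased
    {d n : ℕ}
    (X X' : Matrix (Fin d) (Fin n) ℝ) (R : Fin n → ℝ) (γ : ℝ)
    (AhatT : Matrix (Fin d) (Fin d) ℝ) (θhat : Fin d → ℝ)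
    (hAhatT : AhatT = (X * Xᵀ)⁻¹ * (X * X'ᵀ))
    (hθhat : θhat = ((X * Xᵀ)⁻¹).mulVec (X.mulVec R))
    (h₁ : IsUnit (X * Xᵀ))
    (h₂ : IsUnit (X * (X - γ • X')ᵀ))
    (h₃ : IsUnit ((1 : Matrix (Fin d) (Fin d) ℝ) - γ • AhatT)) :
    ((X * (X - γ • X')ᵀ)⁻¹).mulVec (X.mulVec R) =
      (((1 : Matrix (Fin d) (Fin d) ℝ) - γ • AhatT)⁻¹).mulVec θhat := by
  have hd : IsUnit (X * Xᵀ).det := (Matrix.isUnit_iff_isUnit_det _).1 h₁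
  have key : X * (X - γ • X')ᵀ = (X * Xᵀ) * ((1 : Matrix (Fin d) (Fin d) ℝ) - γ • AhatT) := by
    rw [hAhatT, Matrix.mul_sub, Matrix.mul_one, Matrix.mul_smul,
      Matrix.mul_nonsing_inv_cancel_left _ _ hd, Matrix.transpose_sub, Matrix.transpose_smul,
      Matrix.mul_sub, Matrix.mul_smul]
  rw [key, Matrix.mul_inv_rev, hθhat, Matrix.mulVec_mulVec _ _ ((X * Xᵀ)⁻¹)]
end

section
/- Let γ ∈ (0,1), let A be a d×d real matrix with γ·‖A‖² < 1 in the L∞ operator norm, let Q be a d×d real matrix, and let x ∈ ℝᵈ. Define m : ℕ → ℝ^{d×d} by m₀ = xxᵀ and m_{t+1} = A m_t Aᵀ + I_d. Let P be the unique solution of the discrete Lyapunov equation γ AᵀPA − P + Q = 0. Then the series ∑_{t=0}^∞ γᵗ · tr(Q m_t) converges and equals xᵀPx + (γ/(1−γ)) tr(P). -/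
open Matrix

attribute [local instance] Matrix.linftyOpNormedRing


theorem aux_row {d : ℕ} (A : Matrix (Fin d) (Fin d) ℝ) (i : Fin d) :
    ∑ k, |A i k| ≤ ‖A‖ := by
  rw [Matrix.linfty_opNorm_def]
  have h := Finset.le_sup (f := fun i => ∑ j, ‖A i j‖₊) (Finset.mem_univ i)
  have h2 : ((∑ j, ‖A i j‖₊ : NNReal) : ℝ) ≤
    ((Finset.univ.sup fun i => ∑ j, ‖A i j‖₊ : NNReal) : ℝ) := by exact_mod_cast h
  simpa using h2

theorem aux_conj {d : ℕ} (A M : Matrix (Fin d) (Fin d) ℝ) (b : ℝ) (hb : 0 ≤ b)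
    (hM : ∀ i j, |M i j| ≤ b) (i j : Fin d) : |(A * M * Aᵀ) i j| ≤ ‖A‖ ^ 2 * b := by
  have h1 : ∀ l, |(A * M) i l| ≤ ‖A‖ * b := by
    intro l
    rw [Matrix.mul_apply]
    calc |∑ k, A i k * M k l| ≤ ∑ k, |A i k * M k l| := Finset.abs_sum_le_sum_abs _ _
      _ ≤ ∑ k, |A i k| * b := by
          apply Finset.sum_le_sum
          intro k _
          rw [abs_mul]
          exact mul_le_mul_of_nonneg_left (hM k l) (abs_nonneg _)
      _ = (∑ k, |A i k|) * b := by rw [Finset.sum_mul]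
      _ ≤ ‖A‖ * b := mul_le_mul_of_nonneg_right (aux_row A i) hb
  rw [Matrix.mul_apply]
  have hnn : 0 ≤ ‖A‖ * b := mul_nonneg (norm_nonneg _) hb
  calc |∑ l, (A * M) i l * Aᵀ l j| ≤ ∑ l, |(A * M) i l * Aᵀ l j| :=
        Finset.abs_sum_le_sum_abs _ _
    _ ≤ ∑ l, (‖A‖ * b) * |A j l| := by
          apply Finset.sum_le_sum
          intro l _
          rw [abs_mul, Matrix.transpose_apply]
          exact mul_le_mul_of_nonneg_right (h1 l) (abs_nonneg _)
    _ = (‖A‖ * b) * ∑ l, |A j l| := by rw [Finset.mul_sum]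
    _ ≤ (‖A‖ * b) * ‖A‖ := mul_le_mul_of_nonneg_left (aux_row A j) hnn
    _ = ‖A‖ ^ 2 * b := by ring

theorem aux_bound {d : ℕ} (γ : ℝ) (hγ : γ ∈ Set.Ioo (0 : ℝ) 1)
    (A : Matrix (Fin d) (Fin d) ℝ) (hA : γ * ‖A‖ ^ 2 < 1)
    (m : ℕ → Matrix (Fin d) (Fin d) ℝ)
    (hmrec : ∀ t, m (t + 1) = A * m t * Aᵀ + 1) :
    ∃ C ρ : ℝ, 0 ≤ ρ ∧ ρ < 1 ∧ ∀ t i j, γ ^ t * |m t i j| ≤ C * ρ ^ t := by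
  obtain ⟨h0, h1⟩ := hγ
  obtain ⟨ρ, hρ, hρ1⟩ := exists_between (max_lt hA h1)
  obtain ⟨hρA, hργ⟩ := max_lt_iff.1 hρ
  have hρ0 : 0 < ρ := h0.trans hργ
  have hδ : 0 < ρ - γ * ‖A‖ ^ 2 := sub_pos.2 hρA
  set C : ℝ := γ / (ρ - γ * ‖A‖ ^ 2) + ∑ i, ∑ j, |m 0 i j| with hC
  have hS : 0 ≤ ∑ i, ∑ j, |m 0 i j| := by positivity
  have hC0 : 0 ≤ C := by positivity
  have hCγ : γ ≤ C * (ρ - γ * ‖A‖ ^ 2) := by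
    have : γ / (ρ - γ * ‖A‖ ^ 2) ≤ C := by linarith
    exact (div_le_iff₀ hδ).1 this
  refine ⟨C, ρ, hρ0.le, hρ1, ?_⟩
  intro t
  induction t with
  | zero =>
    intro i j
    have a1 : |m 0 i j| ≤ ∑ j, |m 0 i j| :=
      Finset.single_le_sum (f := fun j => |m 0 i j|) (fun _ _ => abs_nonneg _) (Finset.mem_univ j)
    have a2 : ∑ j, |m 0 i j| ≤ ∑ i, ∑ j, |m 0 i j| :=
      Finset.single_le_sum (f := fun i => ∑ j, |m 0 i j|)
        (fun _ _ => Finset.sum_nonneg fun _ _ => abs_nonneg _) (Finset.mem_univ i)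
    have : 0 ≤ γ / (ρ - γ * ‖A‖ ^ 2) := by positivity
    simp only [pow_zero, one_mul, mul_one]
    linarith
  | succ t ih =>
    intro i j
    have hgt : 0 < γ ^ t := pow_pos h0 t
    have hb : ∀ i j, |m t i j| ≤ C * ρ ^ t / γ ^ t := by
      intro i j
      rw [le_div_iff₀ hgt, mul_comm]
      exact ih i j
    have hc := aux_conj A (m t) _ (by positivity) hb i j
    have hone : |(1 : Matrix (Fin d) (Fin d) ℝ) i j| ≤ 1 := by
      rw [Matrix.one_apply]; split_ifs <;> simp
    have hm : |m (t + 1) i j| ≤ ‖A‖ ^ 2 * (C * ρ ^ t / γ ^ t) + 1 := by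
      rw [hmrec, Matrix.add_apply]
      exact (abs_add_le _ _).trans (add_le_add hc hone)
    have hpw : γ ^ t ≤ ρ ^ t := pow_le_pow_left₀ h0.le hργ.le t
    have hrt : 0 < ρ ^ t := pow_pos hρ0 t
    calc γ ^ (t + 1) * |m (t + 1) i j|
        ≤ γ ^ (t + 1) * (‖A‖ ^ 2 * (C * ρ ^ t / γ ^ t) + 1) :=
          mul_le_mul_of_nonneg_left hm (by positivity)
      _ = γ * ‖A‖ ^ 2 * C * ρ ^ t + γ * γ ^ t := by field_simp; ring
      _ ≤ γ * ‖A‖ ^ 2 * C * ρ ^ t + C * (ρ - γ * ‖A‖ ^ 2) * ρ ^ t := by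
          have := mul_le_mul hCγ hpw hgt.le (h0.le.trans hCγ)
          linarith
      _ = C * ρ ^ (t + 1) := by ring

/-- the LQR value function.
Let `m₀ = xxᵀ` and `m_{t+1} = A mₜ Aᵀ + I_d` be the second moments of the linear system
started at `x` with identity noise covariance, and let `P` solve the discrete Lyapunov
equation `γ AᵀPA - P + Q = 0`.  If `γ ∈ (0,1)` and `γ‖A‖² < 1` in the `L∞` operator norm,
the discounted sum of expected quadratic rewards `∑ₜ γᵗ tr(Q mₜ)` converges and equals
`xᵀPx + (γ/(1-γ)) tr(P)`. -/
theorem lqr_value_function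
    {d : ℕ} (γ : ℝ) (hγ : γ ∈ Set.Ioo (0 : ℝ) 1)
    (A Q : Matrix (Fin d) (Fin d) ℝ)
    (hA : γ * ‖A‖ ^ 2 < 1)
    (x : Fin d → ℝ)
    (m : ℕ → Matrix (Fin d) (Fin d) ℝ)
    (hm0 : m 0 = vecMulVec x x)
    (hmrec : ∀ t, m (t + 1) = A * m t * Aᵀ + 1)
    (P : Matrix (Fin d) (Fin d) ℝ)
    (hP : γ • (Aᵀ * P * A) - P + Q = 0) :
    Summable (fun t : ℕ => γ ^ t * (Q * m t).trace) ∧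
      (∑' t : ℕ, γ ^ t * (Q * m t).trace) = x ⬝ᵥ P.mulVec x + γ / (1 - γ) * P.trace := by
  obtain ⟨C, ρ, hρ0, hρ1, hb⟩ := aux_bound γ hγ A hA m hmrec
  obtain ⟨h0, h1⟩ := hγ
  have hs : Summable (fun t : ℕ => γ ^ t * (P * m t).trace) := by
    have he : (fun t : ℕ => γ ^ t * (P * m t).trace) =
        fun t => ∑ i, ∑ k, P i k * (γ ^ t * m t k i) := by
      funext t
      simp only [Matrix.trace, Matrix.diag_apply, Matrix.mul_apply, Finset.mul_sum]
      refine Finset.sum_congr rfl fun i _ => Finset.sum_congr rfl fun k _ => by ring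
    rw [he]
    refine summable_sum fun i _ => summable_sum fun k _ => Summable.mul_left _ ?_
    refine Summable.of_norm_bounded ((summable_geometric_of_lt_one hρ0 hρ1).mul_left C) ?_
    intro t
    rw [Real.norm_eq_abs, abs_mul, abs_of_pos (pow_pos h0 t)]
    exact hb t k i
  have hterm : ∀ t, γ ^ t * (Q * m t).trace = γ ^ t * (P * m t).trace
      - γ ^ (t + 1) * (P * m (t + 1)).trace + γ ^ t * (γ * P.trace) := by
    intro t
    have hQ : Q = P - γ • (Aᵀ * P * A) := by
      have := hP
      rw [← sub_eq_zero, ← this]; abel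
    have h2 : (Aᵀ * P * A * m t).trace = (P * (A * m t * Aᵀ)).trace := by
      rw [show Aᵀ * P * A * m t = Aᵀ * (P * A * m t) by simp only [Matrix.mul_assoc],
        Matrix.trace_mul_comm]
      simp only [Matrix.mul_assoc]
    rw [hQ, hmrec, Matrix.sub_mul, Matrix.smul_mul, Matrix.trace_sub, Matrix.trace_smul, h2,
      Matrix.mul_add, Matrix.trace_add, Matrix.mul_one, smul_eq_mul]
    ring
  have hf0 : (P * m 0).trace = x ⬝ᵥ P.mulVec x := by
    rw [hm0, Matrix.mul_vecMulVec, Matrix.trace_vecMulVec, dotProduct_comm]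
  have hshift := (hasSum_nat_add_iff' 1).2 hs.hasSum
  have hg := (hasSum_geometric_of_lt_one h0.le h1).mul_right (γ * P.trace)
  have hall := (hs.hasSum.sub hshift).add hg
  have hmain : HasSum (fun t : ℕ => γ ^ t * (Q * m t).trace)
      (x ⬝ᵥ P.mulVec x + γ / (1 - γ) * P.trace) := by
    rw [show (fun t : ℕ => γ ^ t * (Q * m t).trace) = _ from funext hterm]
    simp only [Finset.sum_range_one, pow_zero, one_mul, hf0, sub_sub_cancel] at hall
    have e : x ⬝ᵥ P.mulVec x + γ / (1 - γ) * P.trace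
        = x ⬝ᵥ P.mulVec x + (1 - γ)⁻¹ * (γ * P.trace) := by
      rw [div_eq_mul_inv]; ring
    rw [e]
    exact hall
  exact ⟨hmain.summable, hmain.tsum_eq⟩
end
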